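/- Universal property: Let C be a cocommutative rack bialgebra, U(C) its universal enveloping algebra with canonical map q : C → U(C). If q_H : C → H is any Yetter-Drinfel'd rack structure on C over a bialgebra H, then there exists a unique morphism of bialgebras u : U(C) → H with u ∘ q = q_H, and consequently x ·_{U(C)} s = x ·_H u(s) for all x ∈ C, s ∈ U(C). -/

import Mathlib

open TensorProduct

set_option maxHeartbeats 1000000

/-- A rack bialgebra over a field `k`: a counital coaugmented coalgebra
`(C, Δ, ε, 1)` together with a coalgebra morphism `◁ : C ⊗ C → C`
(given here as a bilinear map `lhd`) which is self-distributive and satisfies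
`x ◁ 1 = x`, `1 ◁ x = ε(x)·1` and `ε(x ◁ y) = ε(x)ε(y)`. -/
structure RackBialgebra (k C : Type) [Field k] [AddCommGroup C] [Module k C] where
  comul : C →ₗ[k] C ⊗[k] C
  counit : C →ₗ[k] k
  one : C
  lhd : C →ₗ[k] C →ₗ[k] C
  coassoc : (TensorProduct.assoc k C C C).toLinearMap ∘ₗ
      TensorProduct.map comul LinearMap.id ∘ₗ comul =
    TensorProduct.map LinearMap.id comul ∘ₗ comul
  counit_comul : (TensorProduct.lid k C).toLinearMap ∘ₗ
      TensorProduct.map counit LinearMap.id ∘ₗ comul = LinearMap.id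
  comul_counit : (TensorProduct.rid k C).toLinearMap ∘ₗ
      TensorProduct.map LinearMap.id counit ∘ₗ comul = LinearMap.id
  comul_one : comul one = one ⊗ₜ[k] one
  counit_one : counit one = 1
  lhd_one : ∀ a, lhd a one = a
  one_lhd : ∀ a, lhd one a = counit a • one
  counit_lhd : ∀ a b, counit (lhd a b) = counit a * counit b
  lhd_coalgebra_morphism : comul ∘ₗ TensorProduct.lift lhd =
    TensorProduct.map (TensorProduct.lift lhd) (TensorProduct.lift lhd) ∘ₗ
      (TensorProduct.tensorTensorTensorComm k C C C C).toLinearMap ∘ₗ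
      TensorProduct.map comul comul
  self_distrib : TensorProduct.lift lhd ∘ₗ
      TensorProduct.map (TensorProduct.lift lhd) LinearMap.id =
    TensorProduct.lift lhd ∘ₗ
      TensorProduct.map (TensorProduct.lift lhd) (TensorProduct.lift lhd) ∘ₗ
      (TensorProduct.tensorTensorTensorComm k C C C C).toLinearMap ∘ₗ
      TensorProduct.map LinearMap.id comul

/-- Cocommutativity of the underlying coalgebra of a rack bialgebra. -/
def RackBialgebra.Cocommutative {k C : Type} [Field k] [AddCommGroup C]
    [Module k C] (R : RackBialgebra k C) : Prop :=
  (TensorProduct.comm k C C).toLinearMap ∘ₗ R.comul = R.comul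

open TensorProduct

variable {k C : Type} [Field k] [AddCommGroup C] [Module k C]

/-- `Č = ker ε`, the kernel of the counit of a rack bialgebra. -/
def Cbar (R : RackBialgebra k C) : Submodule k C := LinearMap.ker R.counit

/-- The canonical projection `C → Č`, `x ↦ x − ε(x)·1`. -/
def pbar (R : RackBialgebra k C) : C →ₗ[k] Cbar R :=
  LinearMap.codRestrict (Cbar R)
    (LinearMap.id - LinearMap.toSpanSingleton k C R.one ∘ₗ R.counit)
    (fun x => by
      simp [Cbar, LinearMap.mem_ker, LinearMap.toSpanSingleton_apply,
        R.counit_one])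

/-- The tensor algebra `T = T(Č)` on `Č = ker ε`. -/
abbrev TT (R : RackBialgebra k C) : Type := TensorAlgebra k (Cbar R)

/-- The canonical linear map `i : C → T(Č)`, the identity on `Č` and sending
the coaugmentation `1 ∈ C` to the scalar `1 ∈ T(Č)`. -/
noncomputable def iT (R : RackBialgebra k C) : C →ₗ[k] TT R :=
  TensorAlgebra.ι k ∘ₗ pbar R + Algebra.linearMap k (TT R) ∘ₗ R.counit

/-- The coproduct on `T = T(Č)`: the unique algebra map `T → T ⊗ T` with
`Δ_T(i(x)) = i(x₁) ⊗ i(x₂)`. -/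
noncomputable def comulT (R : RackBialgebra k C) : TT R →ₐ[k] TT R ⊗[k] TT R :=
  TensorAlgebra.lift k
    (TensorProduct.map (iT R) (iT R) ∘ₗ R.comul ∘ₗ (Cbar R).subtype)

/-- The counit on `T = T(Č)`: the unique algebra map `T → k` vanishing
on `Č`. -/
noncomputable def counitT (R : RackBialgebra k C) : TT R →ₐ[k] k :=
  TensorAlgebra.lift k (0 : Cbar R →ₗ[k] k)

/-- The element `i(y₁).i(x ◁ y₂)` of `T(Č)`, as a linear map in `x ⊗ y`. -/
noncomputable def gen1 (R : RackBialgebra k C) : C ⊗[k] C →ₗ[k] TT R :=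
  LinearMap.mul' k (TT R) ∘ₗ
    TensorProduct.map (iT R) (iT R ∘ₗ TensorProduct.lift R.lhd) ∘ₗ
    (TensorProduct.leftComm k C C C).toLinearMap ∘ₗ
    TensorProduct.map LinearMap.id R.comul

/-- The element `i(x).i(y)` of `T(Č)`, as a linear map in `x ⊗ y`. -/
noncomputable def gen2 (R : RackBialgebra k C) : C ⊗[k] C →ₗ[k] TT R :=
  LinearMap.mul' k (TT R) ∘ₗ TensorProduct.map (iT R) (iT R)

/-- The two-sided ideal `J` of `T(Č)` generated by the elements
`i(y₁).i(x ◁ y₂) − i(x).i(y)` for `x, y ∈ C`, as a `k`-submodule. -/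
noncomputable def idealJ (R : RackBialgebra k C) : Submodule k (TT R) :=
  Submodule.span k
    {t | ∃ (a b : TT R) (c : C ⊗[k] C), t = a * (gen1 R c - gen2 R c) * b}


/-- The relation on `T(Č)` identifying `i(y₁).i(x ◁ y₂)` with `i(x).i(y)`. -/
noncomputable def relU (R : RackBialgebra k C) : TT R → TT R → Prop :=
  fun s t => ∃ c : C ⊗[k] C, s = gen1 R c ∧ t = gen2 R c

/-- The universal enveloping algebra `U(C) = T(Č)/J`. -/
abbrev UC (R : RackBialgebra k C) : Type := RingQuot (relU R)

/-- The canonical map `q : C → U(C)`. -/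
noncomputable def qU (R : RackBialgebra k C) : C →ₗ[k] UC R :=
  (RingQuot.mkAlgHom k (relU R)).toLinearMap ∘ₗ iT R

/-!
`U(C)` represents the unital linear maps `f : C → A` into algebras satisfying
`f(y₁) f(x ◁ y₂) = f(x) f(y)`: such an `f` extends uniquely from `Č` to `T(Č)`, and the relation
says exactly that the extension kills `J`. For a Yetter-Drinfel'd structure `q_H`, this relation is
the condition `h₁ q_H(a · h₂) = q_H(a) h` at `h = q_H(y)`. Compatibility with coproducts, counits
and actions is an equality of algebra morphisms out of `U(C)`, hence is checked on `q(C)`; a right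
action becomes such a morphism when read as a map to the opposite endomorphism algebra.
-/

section TensorProduct

variable {S M M' N N' P P' : Type*} [CommSemiring S]
  [AddCommMonoid M] [Module S M] [AddCommMonoid M'] [Module S M']
  [AddCommMonoid N] [Module S N] [AddCommMonoid N'] [Module S N']
  [AddCommMonoid P] [Module S P] [AddCommMonoid P'] [Module S P']

theorem leftComm_comp_map_map (f : M →ₗ[S] M') (g : N →ₗ[S] N') (h : P →ₗ[S] P') :
    (leftComm S M' N' P').toLinearMap ∘ₗ map f (map g h) =
      map g (map f h) ∘ₗ (leftComm S M N P).toLinearMap := by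
  ext
  simp

end TensorProduct

section RightAction

variable {S M A : Type*} [CommSemiring S] [AddCommMonoid M] [Module S M] [Semiring A] [Algebra S A]

/-- The representation `A → End(M)ᵒᵖ` encoding a right action of the algebra `A` on `M`. -/
def rightActionAlgHom (act : M →ₗ[S] A →ₗ[S] M) (act_one : ∀ x, act x 1 = x)
    (act_mul : ∀ x a b, act (act x a) b = act x (a * b)) : A →ₐ[S] (Module.End S M)ᵐᵒᵖ :=
  AlgHom.ofLinearMap ((MulOpposite.opLinearEquiv S).toLinearMap ∘ₗ act.flip)
    (MulOpposite.unop_injective <| LinearMap.ext act_one)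
    fun a b ↦ MulOpposite.unop_injective <| LinearMap.ext fun x ↦ (act_mul x a b).symm

theorem rightActionAlgHom_apply_unop (act : M →ₗ[S] A →ₗ[S] M) (act_one : ∀ x, act x 1 = x)
    (act_mul : ∀ x a b, act (act x a) b = act x (a * b)) (a : A) (x : M) :
    (rightActionAlgHom act act_one act_mul a).unop x = act x a :=
  rfl

end RightAction

namespace RackBialgebra

variable {R : RackBialgebra k C} {A : Type*} [Semiring A] [Algebra k A]

theorem coe_pbar (x : C) : (pbar R x : C) = x - R.counit x • R.one :=
  rfl

theorem coe_pbar_add_counit_smul_one (x : C) : (pbar R x : C) + R.counit x • R.one = x := by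
  rw [coe_pbar, sub_add_cancel]

theorem pbar_coe (x : Cbar R) : pbar R x = x := by
  have counit_coe : R.counit x = 0 := x.2
  ext
  simp [coe_pbar, counit_coe]

theorem iT_apply (x : C) :
    iT R x = TensorAlgebra.ι k (pbar R x) + algebraMap k (TT R) (R.counit x) :=
  rfl

theorem iT_coe (x : Cbar R) : iT R x = TensorAlgebra.ι k x := by
  have counit_coe : R.counit x = 0 := x.2
  rw [iT_apply, pbar_coe, counit_coe, map_zero, add_zero]

theorem iT_one : iT R R.one = 1 := by
  have pbar_one : pbar R R.one = 0 := by
    ext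
    simp [coe_pbar, R.counit_one]
  rw [iT_apply, pbar_one, R.counit_one, map_zero, map_one, zero_add]

theorem lift_subtype_comp_iT {f : C →ₗ[k] A} (map_one : f R.one = 1) :
    (TensorAlgebra.lift k (f ∘ₗ (Cbar R).subtype)).toLinearMap ∘ₗ iT R = f := by
  ext x
  calc TensorAlgebra.lift k (f ∘ₗ (Cbar R).subtype) (iT R x)
      = f (pbar R x) + algebraMap k A (R.counit x) := by
        rw [iT_apply, map_add, TensorAlgebra.lift_ι_apply, AlgHom.commutes]
        rfl
    _ = f (pbar R x + R.counit x • R.one) := by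
        rw [map_add, map_smul, map_one, Algebra.algebraMap_eq_smul_one]
    _ = f x := by rw [coe_pbar_add_counit_smul_one]

theorem comulT_comp_iT : (comulT R).toLinearMap ∘ₗ iT R = map (iT R) (iT R) ∘ₗ R.comul := by
  have map_comul_one : (map (iT R) (iT R) ∘ₗ R.comul) R.one = 1 := by
    rw [LinearMap.comp_apply, R.comul_one, map_tmul, iT_one, Algebra.TensorProduct.one_def]
  rw [comulT, ← LinearMap.comp_assoc]
  exact lift_subtype_comp_iT map_comul_one

theorem counitT_comp_iT : (counitT R).toLinearMap ∘ₗ iT R = R.counit := by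
  have counit_comp_subtype : R.counit ∘ₗ (Cbar R).subtype = 0 := LinearMap.ext fun x ↦ x.2
  rw [counitT, ← counit_comp_subtype]
  exact lift_subtype_comp_iT R.counit_one

/-- The linear maps `f` from a rack bialgebra to an algebra that extend to `U(C)`: those with
`f(1) = 1` and `f(y₁) f(x ◁ y₂) = f(x) f(y)`, the latter written as an equality of linear maps
in `x ⊗ y`. -/
structure IsEnveloping (R : RackBialgebra k C) (f : C →ₗ[k] A) : Prop where
  map_one : f R.one = 1
  mul_lhd : LinearMap.mul' k A ∘ₗ map f (f ∘ₗ lift R.lhd) ∘ₗ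
      (leftComm k C C C).toLinearMap ∘ₗ map LinearMap.id R.comul =
    LinearMap.mul' k A ∘ₗ map f f

theorem algHom_comp_gen1 (φ : TT R →ₐ[k] A) :
    φ.toLinearMap ∘ₗ gen1 R =
      LinearMap.mul' k A ∘ₗ
        map (φ.toLinearMap ∘ₗ iT R) ((φ.toLinearMap ∘ₗ iT R) ∘ₗ lift R.lhd) ∘ₗ
        (leftComm k C C C).toLinearMap ∘ₗ map LinearMap.id R.comul := by
  rw [gen1, ← LinearMap.comp_assoc, AlgHom.comp_mul', LinearMap.comp_assoc,
    ← LinearMap.comp_assoc _ (map (iT R) _), ← map_comp, LinearMap.comp_assoc (lift R.lhd)]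

theorem algHom_comp_gen2 (φ : TT R →ₐ[k] A) :
    φ.toLinearMap ∘ₗ gen2 R =
      LinearMap.mul' k A ∘ₗ map (φ.toLinearMap ∘ₗ iT R) (φ.toLinearMap ∘ₗ iT R) := by
  rw [gen2, ← LinearMap.comp_assoc, AlgHom.comp_mul', LinearMap.comp_assoc, ← map_comp]

theorem IsEnveloping.lift_eq_of_relU {f : C →ₗ[k] A} (hf : IsEnveloping R f) ⦃s t : TT R⦄
    (hst : relU R s t) :
    TensorAlgebra.lift k (f ∘ₗ (Cbar R).subtype) s =
      TensorAlgebra.lift k (f ∘ₗ (Cbar R).subtype) t := by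
  obtain ⟨c, rfl, rfl⟩ := hst
  have lift_gen : (TensorAlgebra.lift k (f ∘ₗ (Cbar R).subtype)).toLinearMap ∘ₗ gen1 R =
      (TensorAlgebra.lift k (f ∘ₗ (Cbar R).subtype)).toLinearMap ∘ₗ gen2 R := by
    rw [algHom_comp_gen1, algHom_comp_gen2, lift_subtype_comp_iT hf.map_one, hf.mul_lhd]
  exact LinearMap.congr_fun lift_gen c

theorem IsEnveloping.of_yetterDrinfeld {H : Type*} [Semiring H] [Algebra k H] [Coalgebra k H]
    {act : C →ₗ[k] H →ₗ[k] C} {f : C →ₗ[k] H} (map_one : f R.one = 1)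
    (map_comul : Coalgebra.comul (R := k) (A := H) ∘ₗ f = map f f ∘ₗ R.comul)
    (lhd_eq : ∀ a b, R.lhd a b = act a (f b))
    (yetterDrinfeld : LinearMap.mul' k H ∘ₗ map LinearMap.id (f ∘ₗ lift act) ∘ₗ
        (leftComm k C H H).toLinearMap ∘ₗ
        map LinearMap.id (Coalgebra.comul (R := k) (A := H)) =
      LinearMap.mul' k H ∘ₗ map f LinearMap.id) :
    IsEnveloping R f where
  map_one := map_one
  mul_lhd := by
    have lift_lhd : lift R.lhd = lift act ∘ₗ map LinearMap.id f := by
      ext a b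
      simp [lhd_eq]
    have map_lift_lhd : map f (f ∘ₗ lift R.lhd) =
        map LinearMap.id (f ∘ₗ lift act) ∘ₗ map f (map LinearMap.id f) := by
      rw [← map_comp, LinearMap.id_comp, lift_lhd, LinearMap.comp_assoc]
    calc LinearMap.mul' k H ∘ₗ map f (f ∘ₗ lift R.lhd) ∘ₗ
          (leftComm k C C C).toLinearMap ∘ₗ map LinearMap.id R.comul
        = LinearMap.mul' k H ∘ₗ map LinearMap.id (f ∘ₗ lift act) ∘ₗ
          (map f (map LinearMap.id f) ∘ₗ (leftComm k C C C).toLinearMap) ∘ₗ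
          map LinearMap.id R.comul := by
          simp only [map_lift_lhd, LinearMap.comp_assoc]
      _ = LinearMap.mul' k H ∘ₗ map LinearMap.id (f ∘ₗ lift act) ∘ₗ
          (leftComm k C H H).toLinearMap ∘ₗ map LinearMap.id (map f f ∘ₗ R.comul) := by
          rw [← leftComm_comp_map_map, LinearMap.comp_assoc, ← map_comp, LinearMap.id_comp]
      _ = (LinearMap.mul' k H ∘ₗ map LinearMap.id (f ∘ₗ lift act) ∘ₗ
          (leftComm k C H H).toLinearMap ∘ₗ
          map LinearMap.id (Coalgebra.comul (R := k) (A := H))) ∘ₗ map LinearMap.id f := by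
          simp only [← map_comul, LinearMap.comp_assoc, ← map_comp, LinearMap.id_comp]
      _ = LinearMap.mul' k H ∘ₗ map f f := by
          rw [yetterDrinfeld, LinearMap.comp_assoc, ← map_comp, LinearMap.comp_id,
            LinearMap.id_comp]

end RackBialgebra

namespace UC

open RackBialgebra

variable {R : RackBialgebra k C} {A : Type*} [Semiring A] [Algebra k A]

theorem algHom_ext {u v : UC R →ₐ[k] A}
    (huv : u.toLinearMap ∘ₗ qU R = v.toLinearMap ∘ₗ qU R) : u = v := by
  refine RingQuot.ringQuot_ext' _ _ _ (TensorAlgebra.hom_ext (LinearMap.ext fun x ↦ ?_))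
  simpa [qU, iT_coe] using LinearMap.congr_fun huv x

/-- The algebra morphism `U(C) → A` extending an enveloping map `C → A`. -/
noncomputable def lift {f : C →ₗ[k] A} (hf : IsEnveloping R f) : UC R →ₐ[k] A :=
  RingQuot.liftAlgHom k ⟨TensorAlgebra.lift k (f ∘ₗ (Cbar R).subtype), hf.lift_eq_of_relU⟩

theorem lift_comp_qU {f : C →ₗ[k] A} (hf : IsEnveloping R f) :
    (lift hf).toLinearMap ∘ₗ qU R = f := by
  ext x
  exact (RingQuot.liftAlgHom_mkAlgHom_apply _ _ _ _).trans
    (LinearMap.congr_fun (lift_subtype_comp_iT hf.map_one) x)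

theorem comul_comp_qU {comulU : UC R →ₐ[k] UC R ⊗[k] UC R}
    (hcomulU : comulU.toLinearMap ∘ₗ (RingQuot.mkAlgHom k (relU R)).toLinearMap =
      map (RingQuot.mkAlgHom k (relU R)).toLinearMap (RingQuot.mkAlgHom k (relU R)).toLinearMap ∘ₗ
        (comulT R).toLinearMap) :
    comulU.toLinearMap ∘ₗ qU R = map (qU R) (qU R) ∘ₗ R.comul := by
  rw [qU, ← LinearMap.comp_assoc, hcomulU, LinearMap.comp_assoc, comulT_comp_iT,
    ← LinearMap.comp_assoc, ← map_comp]

theorem counit_comp_qU {counitU : UC R →ₐ[k] k}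
    (hcounitU : counitU.toLinearMap ∘ₗ (RingQuot.mkAlgHom k (relU R)).toLinearMap =
      (counitT R).toLinearMap) :
    counitU.toLinearMap ∘ₗ qU R = R.counit := by
  rw [qU, ← LinearMap.comp_assoc, hcounitU, counitT_comp_iT]

theorem comul_comp_algHom {H : Type*} [Semiring H] [Bialgebra k H]
    {comulU : UC R →ₐ[k] UC R ⊗[k] UC R}
    (comulU_qU : comulU.toLinearMap ∘ₗ qU R = map (qU R) (qU R) ∘ₗ R.comul)
    {u : UC R →ₐ[k] H} {f : C →ₗ[k] H} (huf : u.toLinearMap ∘ₗ qU R = f)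
    (map_comul : Coalgebra.comul (R := k) (A := H) ∘ₗ f = map f f ∘ₗ R.comul) :
    Coalgebra.comul (R := k) (A := H) ∘ₗ u.toLinearMap =
      map u.toLinearMap u.toLinearMap ∘ₗ comulU.toLinearMap := by
  suffices h : (Bialgebra.comulAlgHom k H).comp u =
      (Algebra.TensorProduct.map u u).comp comulU from congrArg AlgHom.toLinearMap h
  apply algHom_ext
  calc Coalgebra.comul (R := k) (A := H) ∘ₗ u.toLinearMap ∘ₗ qU R
      = map f f ∘ₗ R.comul := by rw [huf, map_comul]
    _ = map u.toLinearMap u.toLinearMap ∘ₗ map (qU R) (qU R) ∘ₗ R.comul := by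
        rw [← LinearMap.comp_assoc, ← map_comp, huf]
    _ = map u.toLinearMap u.toLinearMap ∘ₗ comulU.toLinearMap ∘ₗ qU R := by rw [comulU_qU]

theorem counit_comp_algHom {H : Type*} [Semiring H] [Bialgebra k H] {counitU : UC R →ₐ[k] k}
    (counitU_qU : counitU.toLinearMap ∘ₗ qU R = R.counit)
    {u : UC R →ₐ[k] H} {f : C →ₗ[k] H} (huf : u.toLinearMap ∘ₗ qU R = f)
    (map_counit : Coalgebra.counit (R := k) (A := H) ∘ₗ f = R.counit) :
    Coalgebra.counit (R := k) (A := H) ∘ₗ u.toLinearMap = counitU.toLinearMap := by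
  suffices h : (Bialgebra.counitAlgHom k H).comp u = counitU from congrArg AlgHom.toLinearMap h
  apply algHom_ext
  calc Coalgebra.counit (R := k) (A := H) ∘ₗ u.toLinearMap ∘ₗ qU R
      = R.counit := by rw [huf, map_counit]
    _ = counitU.toLinearMap ∘ₗ qU R := counitU_qU.symm

theorem act_eq_act_algHom {M : Type*} [AddCommMonoid M] [Module k M]
    {actU : M →ₗ[k] UC R →ₗ[k] M} (actU_one : ∀ x, actU x 1 = x)
    (actU_mul : ∀ x s t, actU (actU x s) t = actU x (s * t))
    {act : M →ₗ[k] A →ₗ[k] M} (act_one : ∀ x, act x 1 = x)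
    (act_mul : ∀ x a b, act (act x a) b = act x (a * b))
    {u : UC R →ₐ[k] A} (act_qU : ∀ x y, actU x (qU R y) = act x (u (qU R y)))
    (x : M) (s : UC R) : actU x s = act x (u s) := by
  have actions_eq : rightActionAlgHom actU actU_one actU_mul =
      (rightActionAlgHom act act_one act_mul).comp u :=
    algHom_ext <| LinearMap.ext fun y ↦
      MulOpposite.unop_injective <| LinearMap.ext fun x ↦ act_qU x y
  calc actU x s = (rightActionAlgHom actU actU_one actU_mul s).unop x :=
        (rightActionAlgHom_apply_unop ..).symm
    _ = (rightActionAlgHom act act_one act_mul (u s)).unop x := by rw [actions_eq]; rfl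
    _ = act x (u s) := rightActionAlgHom_apply_unop ..

end UC

open RackBialgebra in
theorem UC_universal_property_general (R : RackBialgebra k C)
    (comulU : UC R →ₐ[k] UC R ⊗[k] UC R) (counitU : UC R →ₐ[k] k)
    (hcomulU : comulU.toLinearMap ∘ₗ (RingQuot.mkAlgHom k (relU R)).toLinearMap =
      map (RingQuot.mkAlgHom k (relU R)).toLinearMap (RingQuot.mkAlgHom k (relU R)).toLinearMap ∘ₗ
        (comulT R).toLinearMap)
    (hcounitU : counitU.toLinearMap ∘ₗ (RingQuot.mkAlgHom k (relU R)).toLinearMap =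
      (counitT R).toLinearMap)
    (actU : C →ₗ[k] UC R →ₗ[k] C) (actU_one : ∀ x, actU x 1 = x)
    (actU_mul : ∀ x g h, actU (actU x g) h = actU x (g * h))
    (actU_q : ∀ x y, actU x (qU R y) = R.lhd x y)
    {H : Type*} [Semiring H] [Bialgebra k H]
    (actH : C →ₗ[k] H →ₗ[k] C) (actH_one : ∀ x, actH x 1 = x)
    (actH_mul : ∀ x g h, actH (actH x g) h = actH x (g * h))
    (qH : C →ₗ[k] H)
    (qH_comul : Coalgebra.comul (R := k) (A := H) ∘ₗ qH = map qH qH ∘ₗ R.comul)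
    (qH_counit : Coalgebra.counit (R := k) (A := H) ∘ₗ qH = R.counit)
    (qH_one : qH R.one = 1) (cond_c : ∀ a b, R.lhd a b = actH a (qH b))
    (cond_d : LinearMap.mul' k H ∘ₗ map LinearMap.id (qH ∘ₗ lift actH) ∘ₗ
        (leftComm k C H H).toLinearMap ∘ₗ
        map LinearMap.id (Coalgebra.comul (R := k) (A := H)) =
      LinearMap.mul' k H ∘ₗ map qH LinearMap.id) :
    ∃ u : UC R →ₐ[k] H,
      (Coalgebra.comul (R := k) (A := H) ∘ₗ u.toLinearMap =
          map u.toLinearMap u.toLinearMap ∘ₗ comulU.toLinearMap ∧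
        Coalgebra.counit (R := k) (A := H) ∘ₗ u.toLinearMap = counitU.toLinearMap ∧
        u.toLinearMap ∘ₗ qU R = qH ∧
        ∀ x s, actU x s = actH x (u s)) ∧
      ∀ v : UC R →ₐ[k] H, v.toLinearMap ∘ₗ qU R = qH → v = u := by
  have enveloping := IsEnveloping.of_yetterDrinfeld qH_one qH_comul cond_c cond_d
  have lift_qU := UC.lift_comp_qU enveloping
  refine ⟨UC.lift enveloping,
    ⟨UC.comul_comp_algHom (UC.comul_comp_qU hcomulU) lift_qU qH_comul,
      UC.counit_comp_algHom (UC.counit_comp_qU hcounitU) lift_qU qH_counit, lift_qU,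
      UC.act_eq_act_algHom actU_one actU_mul actH_one actH_mul fun x y ↦ ?_⟩,
    fun v hv ↦ UC.algHom_ext (hv.trans lift_qU.symm)⟩
  have lift_qU_apply : UC.lift enveloping (qU R y) = qH y := LinearMap.congr_fun lift_qU y
  rw [actU_q, cond_c, lift_qU_apply]

/-- universal property of `U(C)`: let `C` be a cocommutative
rack bialgebra and `U(C)` its universal enveloping algebra with canonical map
`q : C → U(C)` and induced bialgebra structure.  If `q_H : C → H` is any
Yetter-Drinfel'd rack structure on `C` over a bialgebra `H`, then there is a
unique bialgebra morphism `u : U(C) → H` with `u ∘ q = q_H`, and consequently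
`x ·_{U(C)} s = x ·_H u(s)` for all `x ∈ C`, `s ∈ U(C)`. -/
theorem UC_universal_property (R : RackBialgebra k C) (cocomm : R.Cocommutative)
    -- the induced bialgebra structure on `U(C)`
    (comulU : UC R →ₐ[k] UC R ⊗[k] UC R) (counitU : UC R →ₐ[k] k)
    (hcomulU : comulU.toLinearMap ∘ₗ (RingQuot.mkAlgHom k (relU R)).toLinearMap =
      TensorProduct.map (RingQuot.mkAlgHom k (relU R)).toLinearMap
          (RingQuot.mkAlgHom k (relU R)).toLinearMap ∘ₗ
        (comulT R).toLinearMap)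
    (hcounitU : counitU.toLinearMap ∘ₗ
        (RingQuot.mkAlgHom k (relU R)).toLinearMap = (counitT R).toLinearMap)
    -- the canonical right `U(C)`-module structure on `C`
    (actU : C →ₗ[k] UC R →ₗ[k] C)
    (actU_one : ∀ x : C, actU x (1 : UC R) = x)
    (actU_mul : ∀ (x : C) (g h : UC R), actU (actU x g) h = actU x (g * h))
    (actU_q : ∀ x y : C, actU x (qU R y) = R.lhd x y)
    -- a Yetter-Drinfel'd rack structure on `C` over a bialgebra `H`
    (H : Type) [Ring H] [Bialgebra k H]
    (actH : C →ₗ[k] H →ₗ[k] C)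
    (actH_one : ∀ x : C, actH x (1 : H) = x)
    (actH_mul : ∀ (x : C) (g h : H), actH (actH x g) h = actH x (g * h))
    (modcoalg : R.comul ∘ₗ TensorProduct.lift actH =
      TensorProduct.map (TensorProduct.lift actH) (TensorProduct.lift actH) ∘ₗ
        (TensorProduct.tensorTensorTensorComm k C C H H).toLinearMap ∘ₗ
        TensorProduct.map R.comul (Coalgebra.comul (R := k) (A := H)))
    (modcounit : ∀ (x : C) (h : H),
      R.counit (actH x h) = R.counit x * Coalgebra.counit (R := k) h)
    (qH : C →ₗ[k] H)
    (qH_comul : (Coalgebra.comul (R := k) (A := H)) ∘ₗ qH =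
      TensorProduct.map qH qH ∘ₗ R.comul)
    (qH_counit : (Coalgebra.counit (R := k) (A := H)) ∘ₗ qH = R.counit)
    (qH_one : qH R.one = 1)
    (cond_c : ∀ a b : C, R.lhd a b = actH a (qH b))
    (cond_d : LinearMap.mul' k H ∘ₗ
        TensorProduct.map LinearMap.id (qH ∘ₗ TensorProduct.lift actH) ∘ₗ
        (TensorProduct.leftComm k C H H).toLinearMap ∘ₗ
        TensorProduct.map LinearMap.id (Coalgebra.comul (R := k) (A := H)) =
      LinearMap.mul' k H ∘ₗ TensorProduct.map qH LinearMap.id) :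
    ∃! u : UC R →ₐ[k] H,
      -- `u` is a morphism of bialgebras
      ((Coalgebra.comul (R := k) (A := H)) ∘ₗ u.toLinearMap =
        TensorProduct.map u.toLinearMap u.toLinearMap ∘ₗ comulU.toLinearMap) ∧
      ((Coalgebra.counit (R := k) (A := H)) ∘ₗ u.toLinearMap =
        counitU.toLinearMap) ∧
      -- `u ∘ q = q_H`
      (u.toLinearMap ∘ₗ qU R = qH) ∧
      -- the equivariance property `x ·_{U(C)} s = x ·_H u(s)`
      (∀ (x : C) (s : UC R), actU x s = actH x (u s)) := by
  obtain ⟨u, hu, hunique⟩ := UC_universal_property_general R comulU counitU hcomulU hcounitU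
    actU actU_one actU_mul actU_q actH actH_one actH_mul qH qH_comul qH_counit qH_one cond_c cond_d
  exact ⟨u, hu, fun v hv ↦ hunique v hv.2.2.1⟩
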